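/- Let Q be an affine quiver and define the weight λ_reg ∈ Hom(ℤ^{Q_0}, ℤ) by λ_reg(β) = e(δ, β) = ∂(β). Let X be a finite-dimensional representation of the preprojective algebra Π_Q over ℂ. Then X is λ_reg-semistable (with respect to Π_Q-subrepresentations) if and only if ρ(X) is a regular representation of Q, i.e., ∂(dim ρ(X)) = 0 and ∂(dim Y) ≤ 0 for every Q-subrepresentation Y ⊆ ρ(X). -/

import Mathlib

open scoped BigOperators

/-- A finite quiver: finite sets of vertices and arrows with source and target maps. -/
structure FinQuiver where
  V : Type
  A : Type
  [fintypeV : Fintype V]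
  [fintypeA : Fintype A]
  [decEqV : DecidableEq V]
  src : A → V
  tgt : A → V

attribute [instance] FinQuiver.fintypeV FinQuiver.fintypeA FinQuiver.decEqV

namespace FinQuiver

variable (Q : FinQuiver)

/-- The Euler form of a finite quiver. -/
def eulerForm (x y : Q.V → ℤ) : ℤ :=
  (∑ i : Q.V, x i * y i) - ∑ a : Q.A, x (Q.src a) * y (Q.tgt a)

/-- The Tits form of a finite quiver. -/
def titsForm (x : Q.V → ℤ) : ℤ := Q.eulerForm x x

/-- The quiver has no loops. -/
def NoLoops : Prop := ∀ a : Q.A, Q.src a ≠ Q.tgt a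

/-- The underlying (simple) graph of a quiver without loops. -/
def graph : SimpleGraph Q.V where
  Adj i j := i ≠ j ∧ ∃ a : Q.A, (Q.src a = i ∧ Q.tgt a = j) ∨ (Q.src a = j ∧ Q.tgt a = i)
  symm := by
    constructor
    rintro i j ⟨hij, a, h⟩
    exact ⟨hij.symm, a, h.symm⟩
  loopless := by
    constructor
    rintro i ⟨hii, -⟩
    exact hii rfl

/-- The quiver has no oriented cycles. -/
def Acyclic : Prop :=
  ¬ ∃ (n : ℕ) (g : Fin (n + 1) → Q.A), ∀ k, Q.tgt (g k) = Q.src (g (k + 1))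

/-- The double quiver: for each arrow `a : i → j` add a reverse arrow `a* : j → i`. -/
def double : FinQuiver where
  V := Q.V
  A := Q.A ⊕ Q.A
  src := Sum.elim Q.src Q.tgt
  tgt := Sum.elim Q.tgt Q.src

/-- Positive roots: nonzero, nonnegative integer vectors with Tits form at most 1. -/
def PosRoot (x : Q.V → ℤ) : Prop := (∀ i, 0 ≤ x i) ∧ x ≠ 0 ∧ Q.titsForm x ≤ 1

end FinQuiver

/-- An affine quiver: connected, no loops, no oriented cycles, Tits form positive
semidefinite but not positive definite; `δ` is the minimal positive imaginary root,
generating the radical of the symmetrized Euler form. -/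
structure AffineQuiver extends FinQuiver where
  noLoops : toFinQuiver.NoLoops
  connected : toFinQuiver.graph.Connected
  acyclic : toFinQuiver.Acyclic
  posSemidef : ∀ x : V → ℤ, 0 ≤ toFinQuiver.titsForm x
  notPosDef : ∃ x : V → ℤ, x ≠ 0 ∧ toFinQuiver.titsForm x = 0
  δ : V → ℤ
  delta_pos : ∀ i, 0 < δ i
  radical_iff : ∀ x : V → ℤ,
    (∀ y : V → ℤ, toFinQuiver.eulerForm x y + toFinQuiver.eulerForm y x = 0) ↔
      ∃ m : ℤ, x = m • δ

/-- The defect `∂(x) = e(δ, x)`. -/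
def AffineQuiver.defect (Q : AffineQuiver) (x : Q.V → ℤ) : ℤ :=
  Q.eulerForm Q.δ x

/-- A finite-dimensional representation of a finite quiver over a field `k`. -/
structure QRep (Q : FinQuiver) (k : Type) [Field k] where
  carrier : Q.V → Type
  [acgI : ∀ i, AddCommGroup (carrier i)]
  [modI : ∀ i, Module k (carrier i)]
  [fdI : ∀ i, FiniteDimensional k (carrier i)]
  map : ∀ a : Q.A, carrier (Q.src a) →ₗ[k] carrier (Q.tgt a)

attribute [instance] QRep.acgI QRep.modI QRep.fdI

namespace QRep

variable {Q : FinQuiver} {k : Type} [Field k]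

/-- The dimension vector of a representation. -/
noncomputable def dimVec (X : QRep Q k) : Q.V → ℤ :=
  fun i => (Module.finrank k (X.carrier i) : ℤ)

end QRep

/-- A subrepresentation: a family of subspaces stable under all the arrow maps. -/
structure SubRep {Q : FinQuiver} {k : Type} [Field k] (X : QRep Q k) where
  mod : ∀ i, Submodule k (X.carrier i)
  stable : ∀ a : Q.A, ∀ x ∈ mod (Q.src a), X.map a x ∈ mod (Q.tgt a)

namespace SubRep

variable {Q : FinQuiver} {k : Type} [Field k] {X : QRep Q k}

/-- The dimension vector of a subrepresentation. -/
noncomputable def dimVec (U : SubRep X) : Q.V → ℤ :=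
  fun i => (Module.finrank k (U.mod i) : ℤ)

/-- The representation carried by a subrepresentation. -/
def toRep (U : SubRep X) : QRep Q k where
  carrier i := U.mod i
  map a := (X.map a).restrict (U.stable a)

end SubRep

namespace QRep

variable {Q : FinQuiver} {k : Type} [Field k]

/-- The quotient representation by a subrepresentation. -/
def quotBy (X : QRep Q k) (U : SubRep X) : QRep Q k where
  carrier i := X.carrier i ⧸ U.mod i
  map a := Submodule.mapQ _ _ (X.map a) (fun x hx => U.stable a x hx)

/-- A representation is indecomposable if it is nonzero and is not the internal direct
sum of two nonzero subrepresentations. -/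
def Indecomposable (X : QRep Q k) : Prop :=
  (∃ i, 0 < Module.finrank k (X.carrier i)) ∧
    ∀ U W : SubRep X, (∀ i, IsCompl (U.mod i) (W.mod i)) →
      (∀ i, U.mod i = ⊥) ∨ (∀ i, W.mod i = ⊥)

end QRep

/-- An isomorphism of representations of a quiver. -/
structure RepIso {Q : FinQuiver} {k : Type} [Field k] (X Y : QRep Q k) where
  equiv : ∀ i, X.carrier i ≃ₗ[k] Y.carrier i
  comm : ∀ (a : Q.A) (x : X.carrier (Q.src a)),
    equiv (Q.tgt a) (X.map a x) = Y.map a (equiv (Q.src a) x)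

section Preprojective

variable {Q : FinQuiver} {k : Type} [Field k]

/-- The endomorphism of `⊕ᵢ Xᵢ` induced by the map attached to a single arrow. -/
def arrowEnd (X : QRep Q k) (a : Q.A) :
    (∀ i, X.carrier i) →ₗ[k] (∀ i, X.carrier i) :=
  (LinearMap.single k X.carrier (Q.tgt a)).comp
    ((X.map a).comp (LinearMap.proj (Q.src a)))

/-- The preprojective relation for a representation of the double quiver:
at every vertex, `∑_{t(a)=i} X_a ∘ X_{a*} − ∑_{s(a)=i} X_{a*} ∘ X_a = 0`.
(Stated as one equation of endomorphisms of `⊕ᵢ Xᵢ`, which is equivalent since the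
`i`-component of the equation is exactly the relation at the vertex `i`.) -/
def PreprojRel (Q : FinQuiver) {k : Type} [Field k] (X : QRep Q.double k) : Prop :=
  (∑ a : Q.A, (arrowEnd X (Sum.inl a)).comp (arrowEnd X (Sum.inr a)))
    = ∑ a : Q.A, (arrowEnd X (Sum.inr a)).comp (arrowEnd X (Sum.inl a))

/-- Forget the reverse arrows: a representation of `Π_Q` gives a representation of `Q`. -/
def rho (X : QRep Q.double k) : QRep Q k where
  carrier := X.carrier
  acgI := X.acgI
  modI := X.modI
  fdI := X.fdI
  map a := X.map (Sum.inl a)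

/-- A subrepresentation of a `Π_Q`-representation is in particular a subrepresentation of
the underlying `Q`-representation. -/
def rhoSub {X : QRep Q.double k} (U : SubRep X) : SubRep (rho X) where
  mod := U.mod
  stable a x hx := U.stable (Sum.inl a) x hx

/-- A representation of the double quiver is ρ-fixed if all reverse arrows act as zero. -/
def RhoFixed (X : QRep Q.double k) : Prop :=
  ∀ a : Q.A, X.map (Sum.inr a) = 0

/-- Extend a representation of `Q` to the double quiver by letting all reverse arrows
act as zero. -/
def extendZero (P : QRep Q k) : QRep Q.double k where
  carrier := P.carrier
  acgI := P.acgI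
  modI := P.modI
  fdI := P.fdI
  map b := match b with
    | Sum.inl a => P.map a
    | Sum.inr _ => 0

end Preprojective

section SubQuot

variable {Q : FinQuiver} {k : Type} [Field k]

/-- The subquotient representation `W / U` attached to nested subrepresentations
`U ≤ W` of `Z`. -/
def subQuot (Z : QRep Q k) (U W : SubRep Z) (h : ∀ i, U.mod i ≤ W.mod i) : QRep Q k where
  carrier i := ↥(W.mod i) ⧸ (U.mod i).comap (W.mod i).subtype
  map a := Submodule.mapQ _ _ (W.toRep.map a)
    (fun x hx => U.stable a x.1 hx)

end SubQuot

/-!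
Given a `Q`-subrepresentation `Y` of `ρ(X)`, let `K` be the largest `Q`-subrepresentation of `Y`
that the reverse arrows map into `Y`, and `Z` the smallest `Q`-subrepresentation containing `Y`
and its image under the reverse arrows. By the preprojective relation, the maps into and out of
the neighbours of a vertex form a complex that starts injectively at `Y / K` and ends surjectively
at `Z / Y`. Comparing dimensions at each vertex and summing with the weights `δ i ≥ 0` gives
`e(δ, dim Y - dim K) + e(dim Z - dim Y, δ) ≤ 0`. Since `δ` lies in the radical, `e(·, δ) = -∂`, so
this reads `2 ∂(dim Y) ≤ ∂(dim K) + ∂(dim Z)`. Hence if `Y` has maximal defect then so has `Z`; if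
`Y` also has maximal dimension among the subrepresentations of maximal defect, then `Y = Z` is
stable under the reverse arrows. So the maximal defect of a `Q`-subrepresentation of `ρ(X)` is
attained by a `Π_Q`-subrepresentation of `X`.
-/

section LinearAlgebra

variable {k : Type*} [DivisionRing k]

theorem finrank_submodule_prod {E F : Type*} [AddCommGroup E] [Module k E]
    [FiniteDimensional k E] [AddCommGroup F] [Module k F] [FiniteDimensional k F]
    (p : Submodule k E) (q : Submodule k F) :
    Module.finrank k (p.prod q) = Module.finrank k p + Module.finrank k q := by
  rw [← Module.finrank_prod]
  exact LinearEquiv.finrank_eq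
    { toFun x := (⟨x.1.1, x.2.1⟩, ⟨x.1.2, x.2.2⟩)
      invFun y := ⟨(y.1.1, y.2.1), y.1.2, y.2.2⟩
      map_add' _ _ := rfl
      map_smul' _ _ := rfl }

theorem finrank_submodule_pi {ι : Type*} [Fintype ι] {E : ι → Type*}
    [∀ i, AddCommGroup (E i)] [∀ i, Module k (E i)] [∀ i, FiniteDimensional k (E i)]
    (p : ∀ i, Submodule k (E i)) :
    Module.finrank k (Submodule.pi Set.univ p) = ∑ i, Module.finrank k (p i) := by
  rw [← Module.finrank_pi_fintype k]
  exact LinearEquiv.finrank_eq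
    { toFun x i := ⟨x.1 i, x.2 i (Set.mem_univ i)⟩
      invFun y := ⟨fun i => y i, fun i _ => (y i).2⟩
      map_add' _ _ := rfl
      map_smul' _ _ := rfl }

variable {E F G : Type*} [AddCommGroup E] [Module k E] [FiniteDimensional k E]
  [AddCommGroup F] [Module k F] [AddCommGroup G] [Module k G]

theorem finrank_map_add_finrank_inf_ker (f : E →ₗ[k] F) (S : Submodule k E) :
    Module.finrank k (S.map f) + Module.finrank k (S ⊓ LinearMap.ker f : Submodule k E) =
      Module.finrank k S := by
  rw [← Submodule.map_comap_subtype, Submodule.finrank_map_subtype_eq,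
    ← LinearMap.ker_domRestrict, ← LinearMap.range_domRestrict]
  exact (f.domRestrict S).finrank_range_add_finrank_ker

variable [FiniteDimensional k F]

theorem finrank_map_sup_add_finrank_inf_comap (f : E →ₗ[k] F) (S : Submodule k E)
    (T : Submodule k F) :
    Module.finrank k (S.map f ⊔ T : Submodule k F) +
        Module.finrank k (S ⊓ T.comap f : Submodule k E) =
      Module.finrank k S + Module.finrank k T := by
  have h_map : (S ⊓ T.comap f).map f = S.map f ⊓ T :=
    SetLike.coe_injective (Set.image_inter_preimage f S T)
  have h_ker : S ⊓ T.comap f ⊓ LinearMap.ker f = S ⊓ LinearMap.ker f := by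
    rw [inf_assoc, inf_eq_right.mpr (LinearMap.ker_le_comap f)]
  have h_sup := Submodule.finrank_sup_add_finrank_inf_eq (S.map f) T
  have h_S := finrank_map_add_finrank_inf_ker f S
  have h_inf := finrank_map_add_finrank_inf_ker f (S ⊓ T.comap f)
  rw [h_map, h_ker] at h_inf
  omega

variable [FiniteDimensional k G]

/-- The hypotheses say that `f` and `g` induce a complex `Y / K → P / N → Z / W` whose first map is
injective and whose second map is surjective. -/
theorem finrank_add_finrank_le_of_subquotient_complex {f : E →ₗ[k] F} {g : F →ₗ[k] G}
    (hgf : g ∘ₗ f = 0) {K Y : Submodule k E} {N P : Submodule k F} {W Z : Submodule k G}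
    (hNP : N ≤ P) (hYP : Y ≤ P.comap f) (hNW : N.map g ≤ W)
    (hinj : Y ⊓ N.comap f ≤ K) (hsurj : Z ≤ P.map g ⊔ W) :
    Module.finrank k Y + Module.finrank k N + Module.finrank k Z ≤
      Module.finrank k K + Module.finrank k P + Module.finrank k W := by
  have hfY : Y.map f ≤ W.comap g := by
    rw [← Submodule.map_le_iff_le_comap, ← Submodule.map_comp, hgf, Submodule.map_zero]
    exact bot_le
  have h_le : Y.map f ⊔ N ≤ P ⊓ W.comap g :=
    sup_le (le_inf (Submodule.map_le_iff_le_comap.mpr hYP) hfY)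
      (le_inf hNP (Submodule.map_le_iff_le_comap.mp hNW))
  have h_f := finrank_map_sup_add_finrank_inf_comap f Y N
  have h_g := finrank_map_sup_add_finrank_inf_comap g P W
  have h_inj := Submodule.finrank_mono hinj
  have h_surj := Submodule.finrank_mono hsurj
  have h_mid := Submodule.finrank_mono h_le
  omega

end LinearAlgebra

section ArrowMaps

variable {k V A : Type*} [Semiring k] {E : V → Type*} [∀ i, AddCommMonoid (E i)]
  [∀ i, Module k (E i)] {s t : A → V}

/-- The map on an arrow leaving `i`, as a map on `E i`; for `h = rfl` it is `φ a`
definitionally. -/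
def mapFrom (φ : ∀ a, E (s a) →ₗ[k] E (t a)) {a : A} {i : V} (h : s a = i) : E i →ₗ[k] E (t a) :=
  h ▸ φ a

/-- The map on an arrow entering `i`, as a map to `E i`; for `h = rfl` it is `φ a`
definitionally. -/
def mapTo (φ : ∀ a, E (s a) →ₗ[k] E (t a)) {a : A} {i : V} (h : t a = i) : E (s a) →ₗ[k] E i :=
  h ▸ φ a

/-- The maps on the arrows leaving `i`, as one map `E i → ∏_{s(a)=i} E (t a)`. -/
def outMap (φ : ∀ a, E (s a) →ₗ[k] E (t a)) (i : V) :
    E i →ₗ[k] ∀ a : {a // s a = i}, E (t a) :=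
  LinearMap.pi fun a => mapFrom φ a.2

/-- The maps on the arrows entering `i`, as one map `∏_{t(a)=i} E (s a) → E i`. -/
def inMap [Fintype A] [DecidableEq V] (φ : ∀ a, E (s a) →ₗ[k] E (t a)) (i : V) :
    (∀ a : {a // t a = i}, E (s a)) →ₗ[k] E i :=
  ∑ a : {a // t a = i}, mapTo φ a.2 ∘ₗ LinearMap.proj a

/-- The family of the vectors sent into `U` by every arrow. -/
def pullback (φ : ∀ a, E (s a) →ₗ[k] E (t a)) :
    (∀ i, Submodule k (E i)) →o (∀ i, Submodule k (E i)) where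
  toFun U i := (Submodule.pi Set.univ fun a : {a // s a = i} => U (t a)).comap (outMap φ i)
  monotone' _ _ h _ := Submodule.comap_mono (Submodule.pi_mono fun a _ => h (t a))

/-- The family spanned by the images of `U` under the arrows. -/
def pushforward [Fintype A] [DecidableEq V] (φ : ∀ a, E (s a) →ₗ[k] E (t a)) :
    (∀ i, Submodule k (E i)) →o (∀ i, Submodule k (E i)) where
  toFun U i := (Submodule.pi Set.univ fun a : {a // t a = i} => U (s a)).map (inMap φ i)
  monotone' _ _ h _ := Submodule.map_mono (Submodule.pi_mono fun a _ => h (s a))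

theorem le_pullback_iff {φ : ∀ a, E (s a) →ₗ[k] E (t a)} {U W : ∀ i, Submodule k (E i)} :
    U ≤ pullback φ W ↔ ∀ a, ∀ x ∈ U (s a), φ a x ∈ W (t a) := by
  refine ⟨fun h a x hx => h (s a) hx ⟨a, rfl⟩ (Set.mem_univ _), fun h i x hx => ?_⟩
  rintro ⟨a, rfl⟩ -
  exact h a x hx

variable [Fintype A] [DecidableEq V]

theorem pushforward_le_iff {φ : ∀ a, E (s a) →ₗ[k] E (t a)} {U W : ∀ i, Submodule k (E i)} :
    pushforward φ U ≤ W ↔ ∀ a, ∀ x ∈ U (s a), φ a x ∈ W (t a) := by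
  classical
  refine ⟨fun h a x hx => h (t a) ?_, fun h i => ?_⟩
  · refine ⟨Pi.single ⟨a, rfl⟩ x, fun b _ => ?_, ?_⟩
    · obtain rfl | hb := eq_or_ne b ⟨a, rfl⟩
      · simpa using hx
      · simp [hb]
    · rw [inMap, LinearMap.sum_apply, Finset.sum_eq_single ⟨a, rfl⟩]
      · simp [mapTo]
      · intro b _ hb
        simp [hb]
      · simp
  · rintro _ ⟨u, hu, rfl⟩
    rw [inMap, LinearMap.sum_apply]
    refine (W i).sum_mem ?_
    rintro ⟨a, rfl⟩ -
    exact h a _ (hu ⟨a, rfl⟩ (Set.mem_univ _))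

theorem pushforward_le_iff_le_pullback {φ : ∀ a, E (s a) →ₗ[k] E (t a)}
    {U W : ∀ i, Submodule k (E i)} : pushforward φ U ≤ W ↔ U ≤ pullback φ W :=
  pushforward_le_iff.trans le_pullback_iff.symm

/-- The preprojective relation for maps `φ a : E (s a) → E (t a)` and reverse maps `ψ a`, one
equation of endomorphisms of `E i` for each vertex `i`. -/
def VertexRel (φ : ∀ a, E (s a) →ₗ[k] E (t a)) (ψ : ∀ a, E (t a) →ₗ[k] E (s a)) : Prop :=
  ∀ i, inMap ψ i ∘ₗ outMap φ i = inMap φ i ∘ₗ outMap ψ i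

theorem sum_comp_single_apply_self (φ : ∀ a, E (s a) →ₗ[k] E (t a))
    (ψ : ∀ a, E (t a) →ₗ[k] E (s a)) (i : V) (x : E i) :
    (∑ a, (LinearMap.single k E (t a) ∘ₗ φ a ∘ₗ LinearMap.proj (s a)) ∘ₗ
        (LinearMap.single k E (s a) ∘ₗ ψ a ∘ₗ LinearMap.proj (t a))) (Pi.single i x) i =
      inMap φ i (outMap ψ i x) := by
  rw [LinearMap.sum_apply, Finset.sum_apply, inMap, LinearMap.sum_apply]
  refine (Fintype.sum_of_injective Subtype.val Subtype.val_injective _ _ ?_ ?_).symm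
  · intro a ha
    have hai : t a ≠ i := by simpa using ha
    simp [hai]
  · rintro ⟨a, rfl⟩
    simp [outMap, mapFrom, mapTo]

end ArrowMaps

section StableKernelHull

variable {k V A : Type*} {E : V → Type*} {s t : A → V}

section Semiring

variable [Semiring k] [∀ i, AddCommMonoid (E i)] [∀ i, Module k (E i)]
  (φ : ∀ a, E (s a) →ₗ[k] E (t a)) (ψ : ∀ a, E (t a) →ₗ[k] E (s a))
  (Y : ∀ i, Submodule k (E i))

/-- The largest `φ`-stable family in `Y` that `ψ` maps into `Y`. -/
def stableKernel : ∀ i, Submodule k (E i) :=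
  (OrderHom.const _ (Y ⊓ pullback ψ Y) ⊓ pullback φ).gfp

theorem stableKernel_eq :
    stableKernel φ ψ Y = Y ⊓ pullback ψ Y ⊓ pullback φ (stableKernel φ ψ Y) :=
  (OrderHom.map_gfp (OrderHom.const _ (Y ⊓ pullback ψ Y) ⊓ pullback φ)).symm

theorem stableKernel_le : stableKernel φ ψ Y ≤ Y :=
  (stableKernel_eq φ ψ Y).trans_le (inf_le_left.trans inf_le_left)

theorem stableKernel_le_pullback_reverse : stableKernel φ ψ Y ≤ pullback ψ Y :=
  (stableKernel_eq φ ψ Y).trans_le (inf_le_left.trans inf_le_right)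

theorem stableKernel_le_pullback : stableKernel φ ψ Y ≤ pullback φ (stableKernel φ ψ Y) :=
  (stableKernel_eq φ ψ Y).trans_le inf_le_right

variable [Fintype A] [DecidableEq V]

/-- The smallest `φ`-stable family containing `Y` and its image under `ψ`. -/
def stableHull : ∀ i, Submodule k (E i) :=
  (OrderHom.const _ (Y ⊔ pushforward ψ Y) ⊔ pushforward φ).lfp

theorem stableHull_eq :
    stableHull φ ψ Y = Y ⊔ pushforward ψ Y ⊔ pushforward φ (stableHull φ ψ Y) :=
  (OrderHom.map_lfp (OrderHom.const _ (Y ⊔ pushforward ψ Y) ⊔ pushforward φ)).symm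

theorem le_stableHull : Y ≤ stableHull φ ψ Y :=
  (le_sup_left.trans le_sup_left).trans_eq (stableHull_eq φ ψ Y).symm

theorem le_pullback_reverse_stableHull : Y ≤ pullback ψ (stableHull φ ψ Y) :=
  pushforward_le_iff_le_pullback.mp
    ((le_sup_right.trans le_sup_left).trans_eq (stableHull_eq φ ψ Y).symm)

theorem stableHull_le_pullback : stableHull φ ψ Y ≤ pullback φ (stableHull φ ψ Y) :=
  pushforward_le_iff_le_pullback.mp (le_sup_right.trans_eq (stableHull_eq φ ψ Y).symm)

end Semiring

variable [DivisionRing k] [∀ i, AddCommGroup (E i)] [∀ i, Module k (E i)]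
  [∀ i, FiniteDimensional k (E i)] [Fintype A] [DecidableEq V]
  {φ : ∀ a, E (s a) →ₗ[k] E (t a)} {ψ : ∀ a, E (t a) →ₗ[k] E (s a)}
  {Y : ∀ i, Submodule k (E i)}

/-- The complex behind this inequality is
`Y i / K i → ∏_{s(a)=i} Y (t a) / K (t a) × ∏_{t(a)=i} Z (s a) / Y (s a) → Z i / Y i`,
where `K = stableKernel φ ψ Y` and `Z = stableHull φ ψ Y`. -/
theorem VertexRel.finrank_stableHull_add_le (hrel : VertexRel φ ψ) (hY : Y ≤ pullback φ Y) (i : V) :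
    Module.finrank k (stableHull φ ψ Y i) +
        (∑ a : {a // s a = i}, Module.finrank k (stableKernel φ ψ Y (t a)) +
          ∑ a : {a // t a = i}, Module.finrank k (Y (s a))) ≤
      Module.finrank k (stableKernel φ ψ Y i) +
        (∑ a : {a // s a = i}, Module.finrank k (Y (t a)) +
          ∑ a : {a // t a = i}, Module.finrank k (stableHull φ ψ Y (s a))) := by
  have hgf : (inMap ψ i).coprod (-inMap φ i) ∘ₗ (outMap φ i).prod (outMap ψ i) = 0 := by
    rw [LinearMap.coprod_comp_prod, LinearMap.neg_comp, hrel i, add_neg_cancel]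
  have hYP : Y i ≤ pullback φ Y i ⊓ pullback ψ (stableHull φ ψ Y) i :=
    le_inf (hY i) (le_pullback_reverse_stableHull φ ψ Y i)
  have hNW : pushforward ψ (stableKernel φ ψ Y) i ⊔ pushforward φ Y i ≤ Y i :=
    sup_le (pushforward_le_iff_le_pullback.mpr (stableKernel_le_pullback_reverse φ ψ Y) i)
      (pushforward_le_iff_le_pullback.mpr hY i)
  have hinj : Y i ⊓ (pullback φ (stableKernel φ ψ Y) i ⊓ pullback ψ Y i) ≤
      stableKernel φ ψ Y i := by
    rw [inf_comm (pullback φ _ i), ← inf_assoc]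
    exact (stableKernel_eq φ ψ Y).ge i
  have hsurj : stableHull φ ψ Y i ≤
      (pushforward ψ Y i ⊔ pushforward φ (stableHull φ ψ Y) i) ⊔ Y i := by
    rw [sup_comm, ← sup_assoc]
    exact (stableHull_eq φ ψ Y).le i
  have hdim := finrank_add_finrank_le_of_subquotient_complex (K := stableKernel φ ψ Y i)
    (Y := Y i) (W := Y i) (Z := stableHull φ ψ Y i) hgf
    (Submodule.prod_mono (Submodule.pi_mono fun a _ => stableKernel_le φ ψ Y (t a.1))
      (Submodule.pi_mono fun a _ => le_stableHull φ ψ Y (s a.1)))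
    (by rwa [LinearMap.comap_prod_prod])
    (by rwa [LinearMap.map_coprod_prod, Submodule.map_neg])
    (by rwa [LinearMap.comap_prod_prod])
    (by rwa [LinearMap.map_coprod_prod, Submodule.map_neg])
  simp only [finrank_submodule_prod, finrank_submodule_pi] at hdim
  omega

end StableKernelHull

namespace FinQuiver

variable {Q : FinQuiver}

theorem eulerForm_sub_right (x y z : Q.V → ℤ) :
    Q.eulerForm x (y - z) = Q.eulerForm x y - Q.eulerForm x z := by
  simp only [eulerForm, Pi.sub_apply, mul_sub, Finset.sum_sub_distrib]
  ring

theorem eulerForm_eq_sum_out (x y : Q.V → ℤ) :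
    Q.eulerForm x y = ∑ i, x i * (y i - ∑ a : {a // Q.src a = i}, y (Q.tgt a)) := by
  rw [eulerForm, ← Fintype.sum_fiberwise Q.src]
  simp only [mul_sub, Finset.sum_sub_distrib, Finset.mul_sum]
  congr! 3 with i _ a
  rw [a.2]

theorem eulerForm_eq_sum_in (x y : Q.V → ℤ) :
    Q.eulerForm x y = ∑ i, (x i - ∑ a : {a // Q.tgt a = i}, x (Q.src a)) * y i := by
  rw [eulerForm, ← Fintype.sum_fiberwise Q.tgt]
  simp only [sub_mul, Finset.sum_sub_distrib, Finset.sum_mul]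
  congr! 3 with i _ a
  rw [a.2]

end FinQuiver

namespace SubRep

variable {Q : FinQuiver} {k : Type} [Field k] {M : QRep Q k}

theorem le_pullback (Y : SubRep M) : Y.mod ≤ pullback M.map Y.mod :=
  le_pullback_iff.mpr Y.stable

instance : Inhabited (SubRep M) where
  default :=
    { mod _ := ⊥
      stable a x hx := by rw [(Submodule.mem_bot k).mp hx, map_zero]; exact zero_mem _ }

theorem finite_range_dimVec : (Set.range (dimVec : SubRep M → Q.V → ℤ)).Finite :=
  (Set.finite_Icc 0 M.dimVec).subset <| Set.range_subset_iff.mpr fun Y =>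
    ⟨fun _ => Int.natCast_nonneg _, fun i => Int.ofNat_le.mpr (Submodule.finrank_le (Y.mod i))⟩

theorem mod_eq_of_le_of_sum_dimVec_le {Y Z : SubRep M} (h : Y.mod ≤ Z.mod)
    (hdim : ∑ i, Z.dimVec i ≤ ∑ i, Y.dimVec i) : Y.mod = Z.mod := by
  have hle : ∀ i ∈ Finset.univ, Y.dimVec i ≤ Z.dimVec i := fun i _ =>
    Int.ofNat_le.mpr (Submodule.finrank_mono (h i))
  have heq := (Finset.sum_eq_sum_iff_of_le hle).mp ((Finset.sum_le_sum hle).antisymm hdim)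
  exact funext fun i =>
    Submodule.eq_of_le_of_finrank_eq (h i) (Int.ofNat.inj (heq i (Finset.mem_univ i)))

variable (ψ : ∀ a, M.carrier (Q.tgt a) →ₗ[k] M.carrier (Q.src a)) (Y : SubRep M)

/-- The subrepresentation on `stableKernel`, where `ψ` is a family of reverse maps. -/
def stableKernel : SubRep M where
  mod := _root_.stableKernel M.map ψ Y.mod
  stable := le_pullback_iff.mp (stableKernel_le_pullback M.map ψ Y.mod)

/-- The subrepresentation on `stableHull`, where `ψ` is a family of reverse maps. -/
def stableHull : SubRep M where
  mod := _root_.stableHull M.map ψ Y.mod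
  stable := le_pullback_iff.mp (stableHull_le_pullback M.map ψ Y.mod)

variable {ψ}

theorem eulerForm_sub_stableKernel_add_le {δ : Q.V → ℤ} (hδ : 0 ≤ δ)
    (hrel : VertexRel M.map ψ) :
    Q.eulerForm δ (Y.dimVec - (Y.stableKernel ψ).dimVec) +
      Q.eulerForm ((Y.stableHull ψ).dimVec - Y.dimVec) δ ≤ 0 := by
  rw [FinQuiver.eulerForm_eq_sum_out, FinQuiver.eulerForm_eq_sum_in, ← Finset.sum_add_distrib]
  refine Finset.sum_nonpos fun i _ => ?_
  have hdim := hrel.finrank_stableHull_add_le Y.le_pullback i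
  zify at hdim
  rw [mul_comm _ (δ i), ← mul_add]
  refine mul_nonpos_of_nonneg_of_nonpos (hδ i) ?_
  simp only [Pi.sub_apply, Finset.sum_sub_distrib, dimVec, stableKernel, stableHull]
  linarith

theorem two_mul_eulerForm_le_stableKernel_add_stableHull {δ : Q.V → ℤ} (hδ : 0 ≤ δ)
    (hrad : ∀ x, Q.eulerForm δ x + Q.eulerForm x δ = 0) (hrel : VertexRel M.map ψ) :
    2 * Q.eulerForm δ Y.dimVec ≤
      Q.eulerForm δ (Y.stableKernel ψ).dimVec + Q.eulerForm δ (Y.stableHull ψ).dimVec := by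
  have h := Y.eulerForm_sub_stableKernel_add_le hδ hrel
  rw [FinQuiver.eulerForm_sub_right] at h
  linarith [hrad ((Y.stableHull ψ).dimVec - Y.dimVec),
    FinQuiver.eulerForm_sub_right δ (Y.stableHull ψ).dimVec Y.dimVec]

theorem exists_le_pullback_eulerForm_max {δ : Q.V → ℤ} (hδ : 0 ≤ δ)
    (hrad : ∀ x, Q.eulerForm δ x + Q.eulerForm x δ = 0) (hrel : VertexRel M.map ψ) :
    ∃ U : SubRep M, U.mod ≤ pullback ψ U.mod ∧
      ∀ Y : SubRep M, Q.eulerForm δ Y.dimVec ≤ Q.eulerForm δ U.dimVec := by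
  obtain ⟨_, ⟨U, rfl⟩, hU⟩ := Set.exists_max_image (Set.range (dimVec : SubRep M → Q.V → ℤ))
    (fun x => toLex (Q.eulerForm δ x, ∑ i, x i)) finite_range_dimVec (Set.range_nonempty _)
  have hmax (Y : SubRep M) : Q.eulerForm δ Y.dimVec ≤ Q.eulerForm δ U.dimVec :=
    Prod.Lex.monotone_fst _ _ (hU _ ⟨Y, rfl⟩)
  have hhull : Q.eulerForm δ U.dimVec ≤ Q.eulerForm δ (U.stableHull ψ).dimVec := by
    linarith [U.two_mul_eulerForm_le_stableKernel_add_stableHull hδ hrad hrel,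
      hmax (U.stableKernel ψ)]
  have hdim : ∑ i, (U.stableHull ψ).dimVec i ≤ ∑ i, U.dimVec i :=
    (Prod.Lex.toLex_le_toLex'.mp (hU _ ⟨U.stableHull ψ, rfl⟩)).2 ((hmax _).antisymm hhull)
  have hmod : U.mod = (U.stableHull ψ).mod :=
    mod_eq_of_le_of_sum_dimVec_le (le_stableHull M.map ψ U.mod) hdim
  refine ⟨U, ?_, hmax⟩
  calc U.mod ≤ pullback ψ (U.stableHull ψ).mod := le_pullback_reverse_stableHull M.map ψ U.mod
    _ = pullback ψ U.mod := by rw [← hmod]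

end SubRep

section Preprojective

variable {Q : FinQuiver} {k : Type} [Field k] {X : QRep Q.double k}

/-- The maps of `X` on the reverse arrows, as maps between the spaces of `rho X`. -/
def reverseMap (X : QRep Q.double k) (a : Q.A) :
    (rho X).carrier (Q.tgt a) →ₗ[k] (rho X).carrier (Q.src a) :=
  X.map (Sum.inr a)

theorem PreprojRel.vertexRel (hX : PreprojRel Q X) : VertexRel (rho X).map (reverseMap X) := by
  refine fun i => LinearMap.ext fun x => ?_
  have hx := congrFun (LinearMap.congr_fun hX (Pi.single i x)) i
  have h_inr_inl := sum_comp_single_apply_self (reverseMap X) (rho X).map i x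
  have h_inl_inr := sum_comp_single_apply_self (rho X).map (reverseMap X) i x
  exact h_inr_inl.symm.trans (hx.symm.trans h_inl_inr)

theorem exists_subRep_eulerForm_le (hX : PreprojRel Q X) {δ : Q.V → ℤ} (hδ : 0 ≤ δ)
    (hrad : ∀ x, Q.eulerForm δ x + Q.eulerForm x δ = 0) (Y : SubRep (rho X)) :
    ∃ U : SubRep X, Q.eulerForm δ Y.dimVec ≤ Q.eulerForm δ U.dimVec := by
  obtain ⟨U, hU, hmax⟩ := SubRep.exists_le_pullback_eulerForm_max hδ hrad hX.vertexRel
  exact ⟨⟨U.mod, Sum.rec U.stable (le_pullback_iff.mp hU)⟩, hmax Y⟩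

end Preprojective

theorem lambda_reg_semistable_iff_rho_regular_general {Q : FinQuiver} {δ : Q.V → ℤ} (hδ : 0 ≤ δ)
    (hrad : ∀ x, Q.eulerForm δ x + Q.eulerForm x δ = 0) {k : Type} [Field k]
    {X : QRep Q.double k} (hX : PreprojRel Q X) :
    (Q.eulerForm δ X.dimVec = 0 ∧ ∀ U : SubRep X, Q.eulerForm δ U.dimVec ≤ 0) ↔
      (Q.eulerForm δ (rho X).dimVec = 0 ∧
        ∀ Y : SubRep (rho X), Q.eulerForm δ Y.dimVec ≤ 0) := by
  refine and_congr_right fun _ => ⟨fun h Y => ?_, fun h U => h (rhoSub U)⟩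
  obtain ⟨U, hU⟩ := exists_subRep_eulerForm_le hX hδ hrad Y
  exact hU.trans (h U)

/-- Let `Q` be an affine quiver and let `λ_reg(β) = e(δ, β) = ∂(β)`.  A representation
`X` of the preprojective algebra `Π_Q` over `ℂ` is `λ_reg`-semistable (with respect to
`Π_Q`-subrepresentations) if and only if `ρ(X)` is a regular representation of `Q`:
`∂(dim ρ(X)) = 0` and `∂(dim Y) ≤ 0` for every `Q`-subrepresentation `Y ⊆ ρ(X)`. -/
theorem lambda_reg_semistable_iff_rho_regular
    (Q : AffineQuiver) (X : QRep Q.toFinQuiver.double ℂ)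
    (hX : PreprojRel Q.toFinQuiver X) :
    (Q.defect X.dimVec = 0 ∧ ∀ U : SubRep X, Q.defect U.dimVec ≤ 0) ↔
      (Q.defect (rho X).dimVec = 0 ∧
        ∀ Y : SubRep (rho X), Q.defect Y.dimVec ≤ 0) := by
  exact lambda_reg_semistable_iff_rho_regular_general (fun i => (Q.delta_pos i).le)
    ((Q.radical_iff Q.δ).mpr ⟨1, (one_smul ℤ Q.δ).symm⟩) hX
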